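/- Let A be a unital complex Banach algebra and let S = Σ_{i=1}^n M_{a_i,b_i} be a spectrally bounded elementary operator on A. Then Σ_{i=1}^n b_i a_i belongs to 𝒵(A), the centre modulo the radical. -/

import Mathlib

open scoped ENNReal NNReal

/-- The Jacobson radical of a (possibly noncommutative) ring. -/
noncomputable def jacobsonRadical (A : Type*) [Ring A] : Ideal A :=
  Ideal.jacobson (⊥ : Ideal A)

/-- The centre modulo the radical: the inverse image of the centre of `A/rad A`
under the canonical quotient map, i.e. the set of `a ∈ A` commuting with every
element of `A` modulo `rad A`. -/
def centerModRadical (A : Type*) [Ring A] : Set A :=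
  {a : A | ∀ b : A, a * b - b * a ∈ jacobsonRadical A}

/-- A map between complex algebras is spectrally bounded if `r(Tx) ≤ M·r(x)`
for some constant `M ≥ 0` and all `x`. -/
def SpectrallyBounded {A B : Type*} [Ring A] [Algebra ℂ A] [Ring B] [Algebra ℂ B]
    (T : A → B) : Prop :=
  ∃ M : ℝ≥0, ∀ x : A, spectralRadius ℂ (T x) ≤ (M : ℝ≥0∞) * spectralRadius ℂ x

lemma aux_eig {n : ℕ} (m : Matrix (Fin n) (Fin n) ℂ) (h : m.trace = 1) :
    ∃ (l : ℂ) (c : Fin n → ℂ), l ≠ 0 ∧ c ≠ 0 ∧ m.mulVec c = l • c := by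
  rw [Matrix.trace_eq_sum_roots_charpoly] at h
  have : ∃ l ∈ m.charpoly.roots, l ≠ 0 := by
    by_contra! hc
    rw [Multiset.sum_eq_zero hc] at h
    exact zero_ne_one h
  obtain ⟨l, hl, h0⟩ := this
  have h1 := Polynomial.isRoot_of_mem_roots hl
  rw [← Matrix.mem_spectrum_iff_isRoot_charpoly, ← Matrix.spectrum_toLin',
    ← Module.End.hasEigenvalue_iff_mem_spectrum] at h1
  obtain ⟨c, hc⟩ := h1.exists_hasEigenvector
  exact ⟨l, c, h0, hc.2, by simpa using hc.apply_eq_smul⟩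

lemma aux_main {A : Type*} [NormedRing A] [NormedAlgebra ℂ A] [CompleteSpace A]
    {n : ℕ} (a b : Fin n → A)
    (hS : SpectrallyBounded (fun x : A => ∑ i, a i * x * b i))
    {X : Type*} [AddCommGroup X] [Module A X] [Module ℂ X] [IsScalarTower ℂ A X]
    [SMulCommClass ℂ A X]
    (hD : ∀ (f : X →ₗ[ℂ] X) (s : Finset X), ∃ r : A, ∀ m ∈ s, f m = r • m) (xi : X) :
    ¬ LinearIndependent ℂ ![xi, (∑ i, b i * a i) • xi] := by
  classical
  intro hli
  have hxi : xi ≠ 0 := by simpa using hli.ne_zero 0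
  obtain ⟨f, hf0, hf1⟩ : ∃ f : X →ₗ[ℂ] ℂ, f xi = 0 ∧ f ((∑ i, b i * a i) • xi) = 1 := by
    have hmem : ∀ i, ![xi, (∑ i, b i * a i) • xi] i ∈
        Submodule.span ℂ (Set.range ![xi, (∑ i, b i * a i) • xi]) :=
      fun i => Submodule.subset_span ⟨i, rfl⟩
    obtain ⟨f, hf⟩ := LinearMap.exists_extend
      ((Finsupp.lapply (1 : Fin 2) : (Fin 2 →₀ ℂ) →ₗ[ℂ] ℂ) ∘ₗ (hli.repr : _ →ₗ[ℂ] _))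
    have hh : ∀ i, f (![xi, (∑ i, b i * a i) • xi] i) = Finsupp.single i (1 : ℂ) 1 := by
      intro i
      rw [← hli.repr_eq_single i ⟨_, hmem i⟩ rfl]
      exact LinearMap.congr_fun hf ⟨_, hmem i⟩
    exact ⟨f, by simpa using hh 0, by simpa using hh 1⟩
  obtain ⟨g, hg⟩ : ∃ g : X →ₗ[ℂ] ℂ, g xi = 1 := by
    obtain ⟨g, hg⟩ : ∃ g : Module.Dual ℂ X, g xi ≠ 0 := by
      by_contra! h
      exact hxi ((Module.forall_dual_apply_eq_zero_iff ℂ xi).mp h)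
    exact ⟨(g xi)⁻¹ • g, by simp [hg]⟩
  let s : Finset X := insert xi
    ((Finset.univ : Finset (Fin n × Fin n)).image fun p => (b p.1 * a p.2) • xi)
  obtain ⟨x, hx⟩ := hD (f.smulRight xi) s
  obtain ⟨y, hy⟩ := hD (g.smulRight xi) s
  have hs1 : xi ∈ s := by simp [s]
  have hs2 : ∀ j i, (b j * a i) • xi ∈ s := fun j i => by
    simp only [s, Finset.mem_insert, Finset.mem_image]
    exact Or.inr ⟨(j, i), by simp, rfl⟩
  have hx0 : x • xi = 0 := by rw [← hx _ hs1]; simp [hf0]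
  have hy0 : y • xi = xi := by rw [← hy _ hs1]; simp [hg]
  let α : ℝ := ‖y‖ * ‖(1 : A)‖ + 2
  have hα : 1 < α := by have : 0 ≤ ‖y‖ * ‖(1 : A)‖ := by positivity
                        simp only [α]; linarith
  have hu : IsUnit (algebraMap ℂ A α - y) := by
    have : (α : ℂ) ∈ resolventSet ℂ y := by
      apply spectrum.mem_resolventSet_of_norm_lt_mul
      rw [Complex.norm_real, Real.norm_of_nonneg (by linarith)]
      simp only [α]; linarith
    exact this
  obtain ⟨u, hu⟩ := hu
  have hux : ∀ v : X, (u : A) • v = (α : ℂ) • v - y • v := fun v => by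
    rw [hu, sub_smul, algebraMap_smul]
  have hα1 : ((α : ℂ) - 1) ≠ 0 := by
    have : α - 1 ≠ 0 := by linarith
    exact_mod_cast this
  have hui : (↑(u⁻¹) : A) • xi = ((α : ℂ) - 1)⁻¹ • xi := by
    have h1 : (u : A) • xi = ((α : ℂ) - 1) • xi := by rw [hux, hy0, sub_smul, one_smul]
    have h2 : (↑(u⁻¹) : A) • (u : A) • xi = xi := by rw [smul_smul, Units.inv_mul, one_smul]
    rw [h1, smul_comm] at h2
    conv_rhs => rw [← h2]
    rw [smul_smul, inv_mul_cancel₀ hα1, one_smul]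
  have huik : ∀ k : ℕ, (↑(u⁻¹ ^ k) : A) • xi = (((α : ℂ) - 1)⁻¹) ^ k • xi := by
    intro k
    induction k with
    | zero => simp
    | succ k ih => rw [pow_succ, Units.val_mul, mul_smul, hui, smul_comm, ih, smul_smul, pow_succ,
        mul_comm]
  have huk : ∀ k : ℕ, ∀ v ∈ s, ∃ c : ℂ, (↑(u ^ k) : A) • v = (α : ℂ) ^ k • v + c • xi := by
    intro k v hv
    induction k with
    | zero => exact ⟨0, by simp⟩
    | succ k ih =>
      obtain ⟨c, hc⟩ := ih
      refine ⟨-(α : ℂ) ^ k * g v + c * (α - 1), ?_⟩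
      have hyv : y • v = g v • xi := by rw [← hy v hv]; simp
      rw [pow_succ', Units.val_mul, mul_smul, hc, hux, smul_add, smul_add, smul_comm y, smul_comm y,
        hyv, hy0]
      module
  have hxk : ∀ k : ℕ, ∀ v ∈ s, (↑(u⁻¹ ^ k) * x * ↑(u ^ k) : A) • v
      = ((α / (α - 1)) ^ k * f v : ℂ) • xi := by
    intro k v hv
    obtain ⟨c, hc⟩ := huk k v hv
    have hxv : x • v = f v • xi := by rw [← hx v hv]; simp
    rw [mul_smul, mul_smul, hc, smul_add, smul_comm x, smul_comm x, hxv, hx0, smul_zero, add_zero,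
      smul_smul, smul_comm _ _ xi, huik, smul_smul]
    congr 1
    rw [div_pow, inv_pow]; ring
  let m : Matrix (Fin n) (Fin n) ℂ := Matrix.of fun j i => f ((b j * a i) • xi)
  have hm : m.trace = 1 := by
    rw [← hf1, Finset.sum_smul, map_sum]; rfl
  obtain ⟨l, c, hl, hc, hmc⟩ := aux_eig m hm
  let e : X := ∑ i, c i • a i • xi
  have hfe : ∀ j, f (b j • e) = l * c j := by
    intro j
    have := congrFun hmc j
    simp only [Matrix.mulVec, dotProduct, m, Matrix.of_apply, Pi.smul_apply, smul_eq_mul] at this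
    rw [← this]
    simp only [e, Finset.smul_sum, map_sum]
    refine Finset.sum_congr rfl fun i _ => ?_
    rw [smul_comm (b j), map_smul, smul_smul, smul_eq_mul, mul_comm]
  have he : e ≠ 0 := by
    intro h0
    apply hc
    ext j
    have := hfe j
    rw [h0, smul_zero, map_zero] at this
    simpa [hl] using this.symm
  obtain ⟨M, hM⟩ := hS
  have key : ∀ k : ℕ, (α / (α - 1)) ^ k * ‖l‖ ≤ M * (‖x‖ * ‖(1 : A)‖) := by
    intro k
    let z : A := ↑(u⁻¹ ^ k) * x * ↑(u ^ k)
    let μ : ℂ := (α / (α - 1)) ^ k * l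
    have hze : (∑ i, a i * z * b i) • e = μ • e := by
      have h1 : ∀ j, z • b j • e = ((α / (α - 1)) ^ k * (l * c j) : ℂ) • xi := by
        intro j
        rw [← hfe]
        simp only [e, Finset.smul_sum, map_sum, Finset.mul_sum, Finset.sum_smul]
        refine Finset.sum_congr rfl fun i _ => ?_
        rw [smul_comm (b j), smul_comm z, smul_smul (b j), hxk k _ (hs2 j i), f.map_smul, smul_smul (c i)]
        congr 1
        simp only [smul_eq_mul]; ring
      rw [Finset.sum_smul]
      conv_rhs => simp only [e, Finset.smul_sum]
      refine Finset.sum_congr rfl fun i _ => ?_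
      rw [mul_smul, mul_smul, h1, smul_comm (a i), smul_smul μ]
      congr 1
      simp only [μ]; ring
    have hmem : μ ∈ spectrum ℂ (∑ i, a i * z * b i) := by
      rw [spectrum.mem_iff]
      rintro ⟨w, hw⟩
      apply he
      have : (w : A) • e = 0 := by rw [hw, sub_smul, hze, algebraMap_smul, sub_self]
      rw [← one_smul A e, ← Units.inv_mul w, mul_smul, this, smul_zero]
    have h1 : (‖μ‖₊ : ℝ≥0∞) ≤ spectralRadius ℂ (∑ i, a i * z * b i) := by
      unfold spectralRadius
      exact le_iSup₂ (f := fun k _ => (‖k‖₊ : ℝ≥0∞)) μ hmem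
    have h2 : spectralRadius ℂ z ≤ ((‖x‖₊ * ‖(1 : A)‖₊ : ℝ≥0) : ℝ≥0∞) := by
      unfold spectralRadius
      refine iSup₂_le fun t ht => ?_
      have : t ∈ spectrum ℂ x := by
        have hz : z = ↑((u ^ k)⁻¹) * x * ↑(u ^ k) := by simp only [z, inv_pow]
        rw [hz, spectrum.units_conjugate'] at ht
        exact ht
      have := spectrum.norm_le_norm_mul_of_mem this
      exact_mod_cast this
    have h3 : (‖μ‖₊ : ℝ≥0∞) ≤ ((M * (‖x‖₊ * ‖(1 : A)‖₊) : ℝ≥0) : ℝ≥0∞) := by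
      refine h1.trans ((hM z).trans ?_)
      rw [ENNReal.coe_mul]
      gcongr
    have h4 : ‖μ‖ ≤ M * (‖x‖ * ‖(1 : A)‖) := by exact_mod_cast h3
    have h5 : ‖μ‖ = (α / (α - 1)) ^ k * ‖l‖ := by
      simp only [μ]
      rw [norm_mul, norm_pow]
      congr 2
      rw [← Complex.ofReal_one, ← Complex.ofReal_sub, ← Complex.ofReal_div, Complex.norm_real,
        Real.norm_of_nonneg]
      exact div_nonneg (by linarith) (by linarith)
    rw [← h5]; exact h4
  have hlp : 0 < ‖l‖ := norm_pos_iff.mpr hl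
  have hr : 1 < α / (α - 1) := by rw [one_lt_div (by linarith)]; linarith
  obtain ⟨k, hk⟩ := pow_unbounded_of_one_lt (M * (‖x‖ * ‖(1 : A)‖) / ‖l‖) hr
  rw [div_lt_iff₀ hlp] at hk
  exact absurd (key k) (not_le.mpr hk)

lemma aux_schur {A : Type*} [NormedRing A] [NormedAlgebra ℂ A] [CompleteSpace A]
    (L : Submodule A A) (hL : Ideal.IsMaximal (L : Ideal A)) (d : Module.End A (A ⧸ L)) :
    ∃ l : ℂ, ∀ v, d v = l • v := by
  have : IsClosed (L : Set A) := Ideal.IsMaximal.isClosed (I := L)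
  have : IsSimpleModule A (A ⧸ L) := isSimpleModule_iff_isCoatom.mpr hL.out
  have : Nontrivial (A ⧸ L) := IsSimpleModule.nontrivial A _
  have hcont : ∀ d : Module.End A (A ⧸ L), Continuous d := by
    intro d
    have hq : Topology.IsQuotientMap (Submodule.Quotient.mk : A → A ⧸ L) := isQuotientMap_quot_mk
    rw [hq.continuous_iff]
    obtain ⟨q, hq'⟩ := Submodule.Quotient.mk_surjective L (d (Submodule.Quotient.mk 1))
    have : (d ∘ (Submodule.Quotient.mk : A → A ⧸ L)) = fun c => Submodule.Quotient.mk (c * q) := by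
      ext c
      have h1 : (Submodule.Quotient.mk c : A ⧸ L) = c • Submodule.Quotient.mk 1 := by
        rw [← Submodule.Quotient.mk_smul, smul_eq_mul, mul_one]
      simp only [Function.comp_apply]
      rw [h1, map_smul, ← hq', ← Submodule.Quotient.mk_smul, smul_eq_mul]
    rw [this]
    exact hq.continuous.comp (by fun_prop)
  let T : (A ⧸ L) →L[ℂ] (A ⧸ L) := ⟨d.restrictScalars ℂ, hcont d⟩
  obtain ⟨l, hl⟩ := spectrum.nonempty T
  refine ⟨l, ?_⟩
  let d' : Module.End A (A ⧸ L) := l • 1 - d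
  rcases LinearMap.bijective_or_eq_zero d' with hb | h0
  · exfalso
    apply hl
    let e := LinearEquiv.ofBijective d' hb
    let T' : (A ⧸ L) →L[ℂ] (A ⧸ L) :=
      ⟨(e.symm : (A ⧸ L) →ₗ[A] (A ⧸ L)).restrictScalars ℂ, hcont e.symm⟩
    have hT : ∀ v, (algebraMap ℂ ((A ⧸ L) →L[ℂ] (A ⧸ L)) l - T) v = e v := fun v => by
      simp [e, d', Algebra.algebraMap_eq_smul_one]; rfl
    refine ⟨⟨algebraMap ℂ _ l - T, T', ?_, ?_⟩, rfl⟩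
    · ext v
      change (algebraMap ℂ ((A ⧸ L) →L[ℂ] (A ⧸ L)) l - T) (e.symm v) = v
      rw [hT]; exact e.apply_symm_apply v
    · ext v
      change e.symm ((algebraMap ℂ ((A ⧸ L) →L[ℂ] (A ⧸ L)) l - T) v) = v
      rw [hT]; exact e.symm_apply_apply v
  · intro v
    have := LinearMap.congr_fun h0 v
    simp only [d', LinearMap.sub_apply, LinearMap.smul_apply, Module.End.one_apply,
      LinearMap.zero_apply] at this
    exact (sub_eq_zero.mp this).symm

theorem spectrally_bounded_elementary_operator_sum_mem_centerModRadical
    {A : Type*} [NormedRing A] [NormedAlgebra ℂ A] [CompleteSpace A]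
    {n : ℕ} (a b : Fin n → A)
    (hS : SpectrallyBounded (fun x : A => ∑ i, a i * x * b i)) :
    (∑ i, b i * a i) ∈ centerModRadical A := by
  intro c
  unfold jacobsonRadical Ideal.jacobson
  rw [Submodule.mem_sInf]
  rintro L ⟨-, hL⟩
  change Submodule A A at L
  have : IsSimpleModule A (A ⧸ L) := isSimpleModule_iff_isCoatom.mpr hL.out
  have : SMulCommClass ℂ A (A ⧸ L) := inferInstance
  have hD : ∀ (f : (A ⧸ L) →ₗ[ℂ] (A ⧸ L)) (s : Finset (A ⧸ L)),
      ∃ r : A, ∀ m ∈ s, f m = r • m := by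
    intro f s
    let F : Module.End (Module.End A (A ⧸ L)) (A ⧸ L) :=
      { toFun := f
        map_add' := f.map_add
        map_smul' := fun d v => by
          obtain ⟨l, hl⟩ := aux_schur L hL d
          simp only [Module.End.smul_def, hl, map_smul, RingHom.id_apply] }
    exact jacobson_density F s
  have h := aux_main a b hS hD
  obtain ⟨l, hl⟩ := LinearMap.exists_eq_smul_id_of_forall_notLinearIndependent
    (f := (Module.toModuleEnd ℂ (S := A) (A ⧸ L) (∑ i, b i * a i))) h
  have hl' : ∀ v : A ⧸ L, (∑ i, b i * a i) • v = l • v := fun v => LinearMap.congr_fun hl v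
  rw [← Submodule.Quotient.mk_eq_zero L]
  have h1 := hl' (Submodule.Quotient.mk c)
  have h2 := hl' (Submodule.Quotient.mk 1)
  have h3 : ∀ p q : A, p • (Submodule.Quotient.mk q : A ⧸ L) = Submodule.Quotient.mk (p * q) :=
    fun p q => rfl
  have h4 : (Submodule.Quotient.mk (c * (∑ i, b i * a i)) : A ⧸ L)
      = c • (∑ i, b i * a i) • Submodule.Quotient.mk 1 := by
    rw [h3, h3, mul_one]
  rw [Submodule.Quotient.mk_sub, h4, ← h3, h1, h2, smul_comm c, h3, mul_one, sub_self]
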